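/- arXiv:2511.02657 — 2 statements merged into one kernel-verified Lean document; each statement's English description precedes it below -/
import Mathlib

section
/- Let E be a real inner product space, β ∈ [0,1), let (g_k)_{k≥0} be a sequence in E, and let (z_k) satisfy z_0 = 0 and z_{k+1} = β z_k + g_k. Then for every integer K ≥ 1: Σ_{k=0}^{K−1} ‖z_k‖² ≤ (1/(1 − β)²) · Σ_{t=0}^{K−1} ‖g_t‖². -/
open Finset

/-- The momentum buffer satisfies Σ_{k=0}^{K−1} ‖z_k‖² ≤ (1/(1−β)²) Σ_{t=0}^{K−1} ‖g_t‖². -/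
theorem momentum_buffer_energy_bound
    {E : Type*} [NormedAddCommGroup E] [InnerProductSpace ℝ E]
    (β : ℝ) (hβ0 : 0 ≤ β) (hβ1 : β < 1)
    (g : ℕ → E) (z : ℕ → E)
    (hz0 : z 0 = 0)
    (hz : ∀ k, z (k + 1) = β • z k + g k)
    (K : ℕ) (hK : 1 ≤ K) :
    ∑ k ∈ range K, ‖z k‖ ^ 2 ≤ (1 / (1 - β) ^ 2) * ∑ t ∈ range K, ‖g t‖ ^ 2 := by
  have h1 : 0 < 1 - β := by linarith
  have key : ∀ n : ℕ, (1 - β) ^ 2 * ∑ k ∈ range n, ‖z k‖ ^ 2 + (1 - β) * ‖z n‖ ^ 2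
      ≤ ∑ t ∈ range n, ‖g t‖ ^ 2 := by
    intro n
    induction n with
    | zero => simp [hz0]
    | succ n ih =>
      rw [sum_range_succ, sum_range_succ]
      have hn : ‖z (n + 1)‖ ≤ β * ‖z n‖ + ‖g n‖ := by
        rw [hz n]
        refine (norm_add_le _ _).trans ?_
        rw [norm_smul, Real.norm_of_nonneg hβ0]
      have hs : ‖z (n + 1)‖ ^ 2 ≤ (β * ‖z n‖ + ‖g n‖) ^ 2 :=
        pow_le_pow_left₀ (norm_nonneg _) hn 2
      have hm := mul_le_mul_of_nonneg_left hs h1.le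
      have hq := mul_nonneg hβ0 (sq_nonneg ((1 - β) * ‖z n‖ - ‖g n‖))
      linarith
  have h2 := key K
  have h3 : 0 ≤ (1 - β) * ‖z K‖ ^ 2 := by positivity
  rw [one_div, inv_mul_eq_div, le_div_iff₀ (by positivity)]
  linarith
end

section
/- Let E be a real inner product space, η > 0, β ∈ [0,1), let (g_k)_{k≥0} be a sequence in E, and let (z_k), (y_k), (x_k) satisfy z_0 = 0, z_{k+1} = β z_k + g_k, y_k = β z_{k+1} + g_k, x_{k+1} = x_k − η y_k; define v_k = x_k − (ηβ²/(1−β)) z_k. Let f : E → ℝ be differentiable with gradient ∇f satisfying f(x') − f(x) ≤ ⟨∇f(x), x' − x⟩ + (L/2)‖x' − x‖² for all x, x' ∈ E and some L > 0. Then for every k ≥ 0: f(v_{k+1}) − f(v_k) ≤ (η/(1−β)) ⟨∇f(x_k) − ∇f(v_k), g_k⟩ − (η/(1−β)) ⟨∇f(x_k), g_k⟩ + (η² L / (2(1−β)²)) ‖g_k‖². -/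
open RealInnerProductSpace

/-- Descent lemma along the auxiliary sequence of the Byrd-NAFL recursion:
f(v_{k+1}) − f(v_k) ≤ (η/(1−β))⟨∇f(x_k) − ∇f(v_k), g_k⟩ − (η/(1−β))⟨∇f(x_k), g_k⟩
+ (η²L/(2(1−β)²))‖g_k‖². -/
theorem byrd_nafl_descent_lemma
    {E : Type*} [NormedAddCommGroup E] [InnerProductSpace ℝ E] [CompleteSpace E]
    (η β L : ℝ) (hη : 0 < η) (hβ0 : 0 ≤ β) (hβ1 : β < 1) (hL : 0 < L)
    (g : ℕ → E) (z y x : ℕ → E)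
    (hz0 : z 0 = 0)
    (hz : ∀ k, z (k + 1) = β • z k + g k)
    (hy : ∀ k, y k = β • z (k + 1) + g k)
    (hx : ∀ k, x (k + 1) = x k - η • y k)
    (v : ℕ → E)
    (hv : ∀ k, v k = x k - (η * β ^ 2 / (1 - β)) • z k)
    (f : E → ℝ) (f' : E → E)
    (hdiff : ∀ p, HasGradientAt f (f' p) p)
    (hsmooth : ∀ p q : E, f q - f p ≤ ⟪f' p, q - p⟫ + L / 2 * ‖q - p‖ ^ 2) :
    ∀ k, f (v (k + 1)) - f (v k) ≤
      (η / (1 - β)) * ⟪f' (x k) - f' (v k), g k⟫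
      - (η / (1 - β)) * ⟪f' (x k), g k⟫
      + (η ^ 2 * L / (2 * (1 - β) ^ 2)) * ‖g k‖ ^ 2 := by
  intro k
  have h1 : (1 - β) ≠ 0 := by linarith
  have key : v (k + 1) - v k = (-(η / (1 - β))) • g k := by
    rw [hv, hv, hx, hy, hz]
    match_scalars <;> field_simp <;> ring
  have h := hsmooth (v k) (v (k + 1))
  rw [key, norm_smul, inner_smul_right, mul_pow, Real.norm_eq_abs, sq_abs] at h
  rw [inner_sub_left]
  refine h.trans (le_of_eq ?_)
  field_simp
  ring
end
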